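/- arXiv:0806.0176 — 2 statements merged into one kernel-verified Lean document; each statement's English description precedes it below -/
import Mathlib

section
/- The ring C is an ascending union of Dedekind domains: for each finite subset I ⊆ ℤ∖{0}, the subring R_I generated by x_0 and {x_n : n ∈ I} is a Dedekind domain, R_I ⊆ R_J when I ⊆ J, and C is the union of the R_I; moreover C is flat over each R_I. -/
open scoped symmDiff

noncomputable section

/-- The ring `C = k[x_n : n ∈ ℤ] / (x_n² + n = x_m² + m)`. -/
abbrev WeylC (k : Type) [Field k] : Type :=
  MvPolynomial ℤ k ⧸ Ideal.span { p : MvPolynomial ℤ k |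
    ∃ m n : ℤ, p = MvPolynomial.X n ^ 2 + (n : MvPolynomial ℤ k)
      - MvPolynomial.X m ^ 2 - (m : MvPolynomial ℤ k) }

variable (k : Type) [Field k]

/-- The generator `x_n` of `C`. -/
def xC (n : ℤ) : WeylC k := Ideal.Quotient.mk _ (MvPolynomial.X n)

/-- `x_I := ∏_{i ∈ I} x_i` for a finite subset `I ⊆ ℤ` (with `x_∅ = 1`). -/
def xS (I : Finset ℤ) : WeylC k := ∏ i ∈ I, xC k i

/-- The identity component `C_∅ = k[x_0²]`. -/
def Cphi : Subalgebra k (WeylC k) := Algebra.adjoin k {xC k 0 ^ 2}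

/-- The homogeneous component `C_I = C_∅ · x_I` of the `ℤ_fin`-grading on `C`. -/
def Cgrade (I : Finset ℤ) : Submodule k (WeylC k) :=
  (Cphi k).toSubmodule.map (LinearMap.mulRight k (xS k I))

/-- The subring `R_I` of `C` generated (as a `k`-algebra) by `x_0` and the `x_n`
with `n ∈ I`, for a finite subset `I ⊆ ℤ ∖ {0}`. -/
def RI (I : Finset ℤ) : Subalgebra k (WeylC k) :=
  Algebra.adjoin k ({xC k 0} ∪ xC k '' (I : Set ℤ))

variable [CharZero k]

/-!
For `n ∉ I ∪ {0}` the ring `R_{I ∪ {n}}` is the quadratic extension `R_I[√(x_n²)]`, where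
`x_n² = x_0² - n` lies in `R_I`. Adjoining a square root of `d` to a Dedekind domain in which `2` is
invertible and `d` is a nonzero radical nonunit gives a Dedekind domain again: if `a + b√d` is
integral, then so are `2a` and `d b²`, and radicality of `d` forces `b` into the ring. Elements that
are radical and coprime to `d` stay radical, and the `x_m²` are pairwise coprime because they differ
by nonzero integers. So one can start from `R_∅ = k[x_0]`, where `x_n² = X² - n` is separable, and
adjoin the `x_n` one at a time.

The required nondegeneracy comes from maps out of `C`: homomorphisms to an algebraic closure of `k`
take any prescribed value at a given `x_n`, so `x_0` is transcendental and `x_n²` is not a unit, and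
the sign flip `x_n ↦ -x_n` shows that `1, x_n` are linearly independent over `R_I`. Finally `C` is a
domain, being a directed union of domains, hence torsion-free and so flat over the Dedekind domain
`R_I`.
-/

theorem isDomain_of_directed_iSup_eq_top {ι R A : Type*} [Nonempty ι] [CommSemiring R] [Ring A]
    [Algebra R A] {S : ι → Subalgebra R A} [∀ i, IsDomain (S i)] (hdir : Directed (· ≤ ·) S)
    (hS : ⨆ i, S i = ⊤) : IsDomain A := by
  have exists_mem (a : A) : ∃ i, a ∈ S i := by
    have ha : a ∈ (↑(⨆ i, S i) : Set A) := hS ▸ Set.mem_univ a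
    rwa [Subalgebra.coe_iSup_of_directed hdir, Set.mem_iUnion] at ha
  have : Nontrivial A := Subtype.val_injective (p := (· ∈ S (Classical.arbitrary ι))).nontrivial
  have : NoZeroDivisors A := by
    refine ⟨fun {a b} hab ↦ ?_⟩
    obtain ⟨i, hi⟩ := exists_mem a
    obtain ⟨j, hj⟩ := exists_mem b
    obtain ⟨l, hil, hjl⟩ := hdir i j
    have hab' : (⟨a, hil hi⟩ : S l) * ⟨b, hjl hj⟩ = 0 := Subtype.ext hab
    exact (mul_eq_zero.1 hab').imp (congrArg Subtype.val) (congrArg Subtype.val)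
  exact NoZeroDivisors.to_isDomain A

theorem isRadical_map_mulEquiv {M N : Type*} [Monoid M] [Monoid N] (e : M ≃* N) {x : M}
    (hx : IsRadical x) : IsRadical (e x) := by
  intro n y hy
  rw [← e.apply_symm_apply y, ← map_pow, map_dvd_iff] at hy
  simpa only [map_dvd_iff, e.apply_symm_apply] using map_dvd e (hx n _ hy)

theorem isDedekindDomain_of_ringEquiv {A B : Type*} [CommRing A] [CommRing B]
    [IsDedekindDomain A] (e : A ≃+* B) : IsDedekindDomain B :=
  { e.symm.toMulEquiv.isDomain A, isNoetherianRing_of_ringEquiv A e,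
    Ring.DimensionLEOne.of_ringEquiv e.symm, IsIntegrallyClosed.of_equiv e with }

section Quadratic

variable {A : Type*} [CommRing A] {d : A}

open QuadraticAlgebra

theorem isRadical_algebraMap_quadraticAlgebra {e : A} (h2 : IsUnit (2 : A)) (he : IsRadical e)
    (hed : IsCoprime e d) : IsRadical (algebraMap A (QuadraticAlgebra A d 0) e) := by
  rw [isRadical_iff_pow_one_lt 2 one_lt_two]
  intro z hz
  rw [algebraMap_dvd_iff, sq, re_mul, im_mul] at hz
  have dvd_norm : e ∣ z.re ^ 2 + d * z.im ^ 2 := by convert hz.1 using 1; ring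
  have dvd_prod : e ∣ z.re * z.im :=
    h2.dvd_mul_left.1 (by convert hz.2 using 1; ring)
  have dvd_re : e ∣ z.re := by
    refine he 4 _ ?_
    have h := (dvd_norm.mul_left (z.re ^ 2)).sub (dvd_prod.mul_left (d * z.re * z.im))
    convert h using 1
    ring
  have dvd_im : e ∣ z.im :=
    he 2 _ <| hed.dvd_of_dvd_mul_left <|
      (dvd_add_right (dvd_pow dvd_re two_ne_zero)).1 dvd_norm
  exact algebraMap_dvd_iff.2 ⟨dvd_re, dvd_im⟩

section Map

variable (d) (K : Type*) [CommRing K] [Algebra A K]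

/-- The homomorphism `A[√d] → K[√d]` induced by `A → K`. -/
def quadraticAlgebraMap :
    QuadraticAlgebra A d 0 →ₐ[A] QuadraticAlgebra K (algebraMap A K d) 0 :=
  lift ⟨ω, by ext <;> simp [Algebra.algebraMap_eq_smul_one]⟩

@[simp]
theorem re_quadraticAlgebraMap (z : QuadraticAlgebra A d 0) :
    (quadraticAlgebraMap d K z).re = algebraMap A K z.re := by
  simp [quadraticAlgebraMap, Algebra.algebraMap_eq_smul_one]

@[simp]
theorem im_quadraticAlgebraMap (z : QuadraticAlgebra A d 0) :
    (quadraticAlgebraMap d K z).im = algebraMap A K z.im := by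
  simp [quadraticAlgebraMap, Algebra.algebraMap_eq_smul_one]

theorem quadraticAlgebraMap_injective [FaithfulSMul A K] :
    Function.Injective (quadraticAlgebraMap d K) := by
  intro z w h
  have hre := congrArg re h
  have him := congrArg im h
  simp only [re_quadraticAlgebraMap, im_quadraticAlgebraMap, algebraMap.coe_inj] at hre him
  exact QuadraticAlgebra.ext hre him

end Map

section IsIntegrallyClosed

variable {K : Type*} [Field K] [Algebra A K] [IsIntegrallyClosed A] [IsFractionRing A K]

theorem exists_algebraMap_eq_of_isIntegral_mul_sq (hd0 : d ≠ 0) (hd : IsRadical d) {b : K}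
    (hb : IsIntegral A (algebraMap A K d * b ^ 2)) : ∃ a, algebraMap A K a = b := by
  have hd0' : algebraMap A K d ≠ 0 := by simpa using hd0
  obtain ⟨c, hc⟩ := IsIntegrallyClosed.isIntegral_iff.1 hb
  have hdb : (algebraMap A K d * b) ^ 2 = algebraMap A K (d * c) := by
    rw [map_mul, hc]; ring
  obtain ⟨u, hu⟩ := IsIntegrallyClosed.exists_algebraMap_eq_of_isIntegral_pow two_pos
    (hdb ▸ isIntegral_algebraMap : IsIntegral A ((algebraMap A K d * b) ^ 2))
  rw [← hu, ← map_pow] at hdb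
  obtain ⟨a, rfl⟩ := hd 2 u ⟨c, IsFractionRing.injective A K hdb⟩
  exact ⟨a, mul_left_cancel₀ hd0' (by rw [← map_mul, hu])⟩

theorem exists_quadraticAlgebraMap_eq_of_isIntegral (h2 : IsUnit (2 : A)) (hd0 : d ≠ 0)
    (hd : IsRadical d) {z : QuadraticAlgebra K (algebraMap A K d) 0} (hz : IsIntegral A z) :
    ∃ w, quadraticAlgebraMap d K w = z := by
  have isIntegral_of_two_mul {x : K} (hx : IsIntegral A (2 * x)) : IsIntegral A x := by
    obtain ⟨u, hu⟩ := h2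
    have hx_eq : x = (↑u⁻¹ : A) • (2 * x) := by
      rw [← map_ofNat (algebraMap A K) 2, ← Algebra.smul_def, ← hu, smul_smul, u.inv_mul,
        one_smul]
    exact hx_eq ▸ hx.smul _
  let conj : QuadraticAlgebra K (algebraMap A K d) 0 →ₐ[K]
      QuadraticAlgebra K (algebraMap A K d) 0 :=
    lift ⟨-ω, by simp [omega_mul_omega_eq_add]⟩
  have isIntegral_conj : IsIntegral A (conj z) := hz.map conj
  have algebraMap_inj := algebraMap_injective (R := K) (a := algebraMap A K d) (b := 0)
  have hre : IsIntegral A z.re := isIntegral_of_two_mul <|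
    (isIntegral_algebraMap_iff algebraMap_inj).1 <| by
      convert hz.add isIntegral_conj using 1
      ext <;> simp [conj, algebraMap_eq, two_mul]
  have him : IsIntegral A (algebraMap A K d * z.im ^ 2) :=
    (isIntegral_algebraMap_iff algebraMap_inj).1 <| by
      convert (hz.sub (hre.map (Algebra.ofId K (QuadraticAlgebra K _ _)))).pow 2 using 1
      ext <;> simp [algebraMap_eq, sq, Algebra.ofId_apply, mul_assoc]
  obtain ⟨a, ha⟩ := IsIntegrallyClosed.isIntegral_iff.1 hre
  obtain ⟨b, hb⟩ := exists_algebraMap_eq_of_isIntegral_mul_sq hd0 hd him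
  exact ⟨⟨a, b⟩, QuadraticAlgebra.ext (by simpa using ha) (by simpa using hb)⟩

variable (K) in
theorem not_isSquare_algebraMap_of_isRadical (hd0 : d ≠ 0) (hd : IsRadical d)
    (hu : ¬IsUnit d) : ¬IsSquare (algebraMap A K d) := by
  have := (IsFractionRing.injective A K).isDomain (algebraMap A K)
  rintro ⟨r, hr⟩
  obtain ⟨c, rfl⟩ := IsIntegrallyClosed.exists_algebraMap_eq_of_isIntegral_pow (n := 2) two_pos
    (by rw [sq, ← hr]; exact isIntegral_algebraMap : IsIntegral A (r ^ 2))
  obtain rfl : d = c * c := IsFractionRing.injective A K (by rw [hr, map_mul])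
  have hc : IsUnit c := hd.squarefree hd0 c dvd_rfl
  exact hu (hc.mul hc)

end IsIntegrallyClosed

theorem isDedekindDomain_quadraticAlgebra [IsDedekindDomain A] (h2 : IsUnit (2 : A))
    (hd0 : d ≠ 0) (hd : IsRadical d) (hu : ¬IsUnit d) :
    IsDedekindDomain (QuadraticAlgebra A d 0) := by
  let K := FractionRing A
  let L := QuadraticAlgebra K (algebraMap A K d) 0
  have : Fact (∀ r : K, r ^ 2 ≠ algebraMap A K d + 0 * r) :=
    ⟨fun r hr ↦ not_isSquare_algebraMap_of_isRadical K hd0 hd hu ⟨r, by linear_combination -hr⟩⟩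
  have hinj := quadraticAlgebraMap_injective d K
  have := hinj.isDomain (quadraticAlgebraMap d K)
  algebraize [(quadraticAlgebraMap d K).toRingHom]
  have : IsIntegralClosure (QuadraticAlgebra A d 0) A L :=
    { algebraMap_injective := hinj
      isIntegral_iff := ⟨exists_quadraticAlgebraMap_eq_of_isIntegral h2 hd0 hd,
        by rintro ⟨w, rfl⟩; exact (Algebra.IsIntegral.isIntegral w).algebraMap⟩ }
  have : IsFractionRing (QuadraticAlgebra A d 0) L :=
    IsIntegralClosure.isFractionRing_of_finite_extension A K L _
  exact
    { IsNoetherianRing.of_finite A (QuadraticAlgebra A d 0),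
      Ring.DimensionLEOne.of_isIntegral A (QuadraticAlgebra A d 0),
      (isIntegrallyClosed_iff L).2 fun {z} hz ↦
        exists_quadraticAlgebraMap_eq_of_isIntegral h2 hd0 hd (isIntegral_trans z hz) with }

namespace WeylC

section

omit [CharZero k]

theorem xC_sq_add_intCast (m n : ℤ) : xC k n ^ 2 + n = xC k m ^ 2 + m := by
  have h : (Ideal.Quotient.mk _ (MvPolynomial.X n ^ 2 + (n : MvPolynomial ℤ k)
      - MvPolynomial.X m ^ 2 - (m : MvPolynomial ℤ k)) : WeylC k) = 0 :=
    Ideal.Quotient.eq_zero_iff_mem.2 (Ideal.subset_span ⟨m, n, rfl⟩)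
  simp only [map_sub, map_add, map_pow, map_intCast] at h
  unfold xC
  linear_combination h

variable {k} {B : Type*} [CommRing B] [Algebra k B]

/-- The homomorphism `x_n ↦ y n` out of `C` attached to a solution `y` of its relations. -/
def lift (y : ℤ → B) (hy : ∀ m n : ℤ, y n ^ 2 + n = y m ^ 2 + m) : WeylC k →ₐ[k] B :=
  Ideal.Quotient.liftₐ _ (MvPolynomial.aeval y) <| by
    intro p hp
    refine (Ideal.span_le (I := RingHom.ker (MvPolynomial.aeval (R := k) y))).2 ?_ hp
    rintro _ ⟨m, n, rfl⟩
    rw [SetLike.mem_coe, RingHom.mem_ker]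
    simp only [map_sub, map_add, map_pow, map_intCast, MvPolynomial.aeval_X]
    linear_combination hy m n

@[simp]
theorem lift_xC (y : ℤ → B) (hy : ∀ m n : ℤ, y n ^ 2 + n = y m ^ 2 + m) (n : ℤ) :
    lift (k := k) y hy (xC k n) = y n :=
  MvPolynomial.aeval_X y n

variable (k) in
theorem exists_algHom_xC_eq {E : Type*} [Field E] [IsAlgClosed E] [Algebra k E] (n : ℤ) (c : E) :
    ∃ f : WeylC k →ₐ[k] E, f (xC k n) = c := by
  choose y hy using fun m : ℤ ↦ IsAlgClosed.exists_pow_nat_eq (c ^ 2 + n - m) two_pos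
  have update_sq (m : ℤ) : Function.update y n c m ^ 2 = c ^ 2 + n - m := by
    obtain rfl | hm := eq_or_ne m n
    · simp
    · rw [Function.update_of_ne hm, hy]
  exact ⟨lift (Function.update y n c) fun l m ↦ by rw [update_sq, update_sq]; ring, by simp⟩

variable (k)

theorem xC_sq_ne_zero (n : ℤ) : xC k n ^ 2 ≠ 0 := by
  obtain ⟨f, hf⟩ := exists_algHom_xC_eq k n (1 : AlgebraicClosure k)
  intro h
  simpa [hf] using congrArg f h

theorem transcendental_xC (n : ℤ) : Transcendental k (xC k n) := by
  refine transcendental_iff.2 fun p hp ↦ ?_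
  have aeval_eq_zero (c : AlgebraicClosure k) : p.aeval c = 0 := by
    obtain ⟨f, rfl⟩ := exists_algHom_xC_eq k n c
    rw [Polynomial.aeval_algHom_apply, hp, map_zero]
  rw [← Polynomial.map_eq_zero (algebraMap k (AlgebraicClosure k))]
  exact Polynomial.zero_of_eval_zero _ fun c ↦ by
    rw [Polynomial.eval_map_algebraMap, aeval_eq_zero]

theorem iSup_RI : ⨆ I : Finset ℤ, RI k I = ⊤ := by
  have adjoin_xC : Algebra.adjoin k (Set.range (xC k)) = ⊤ := by
    have range_mk : (Ideal.Quotient.mkₐ k _ : MvPolynomial ℤ k →ₐ[k] WeylC k).range = ⊤ :=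
      (AlgHom.range_eq_top _).2 (Ideal.Quotient.mkₐ_surjective k _)
    rw [← range_mk, ← Algebra.map_top, ← MvPolynomial.adjoin_range_X, AlgHom.map_adjoin,
      ← Set.range_comp]
    rfl
  rw [eq_top_iff, ← adjoin_xC, Algebra.adjoin_le_iff]
  rintro _ ⟨n, rfl⟩
  exact le_iSup (RI k) {n} (Algebra.subset_adjoin (Or.inr ⟨n, by simp, rfl⟩))

variable {k} in
theorem RI_mono {I J : Finset ℤ} (h : I ⊆ J) : RI k I ≤ RI k J :=
  Algebra.adjoin_mono <| Set.union_subset_union_right _ <| Set.image_mono h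

theorem RI_erase_zero (I : Finset ℤ) : RI k (I.erase 0) = RI k I := by
  rw [RI, RI, Finset.coe_erase, ← Set.image_singleton, ← Set.image_union, ← Set.image_union,
    Set.union_sdiff_self]

theorem xC_sq_mem_RI (I : Finset ℤ) (n : ℤ) : xC k n ^ 2 ∈ RI k I := by
  have h0 : xC k 0 ∈ RI k I := Algebra.subset_adjoin (Or.inl rfl)
  rw [eq_sub_of_add_eq (xC_sq_add_intCast k 0 n)]
  exact sub_mem (add_mem (pow_mem h0 2) (intCast_mem _ 0)) (intCast_mem _ n)

/-- The square `x_n²` as an element of `R_I`, which contains it for all `n` and `I`. -/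
def xSq (I : Finset ℤ) (n : ℤ) : RI k I := ⟨xC k n ^ 2, xC_sq_mem_RI k I n⟩

theorem xSq_ne_zero (I : Finset ℤ) (n : ℤ) : xSq k I n ≠ 0 :=
  fun h ↦ xC_sq_ne_zero k n (congrArg Subtype.val h)

theorem not_isUnit_xSq (I : Finset ℤ) (n : ℤ) : ¬IsUnit (xSq k I n) := by
  obtain ⟨f, hf⟩ := exists_algHom_xC_eq k n (0 : AlgebraicClosure k)
  intro h
  simpa [xSq, hf] using h.map (f.comp (RI k I).val)

/-- The endomorphism of `C` that sends `x_n` to `-x_n` and fixes the other generators. -/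
def signFlip (n : ℤ) : WeylC k →ₐ[k] WeylC k :=
  lift (Function.update (xC k) n (-xC k n)) fun l m ↦ by
    have update_sq (m : ℤ) : Function.update (xC k) n (-xC k n) m ^ 2 = xC k m ^ 2 := by
      obtain rfl | hm := eq_or_ne m n
      · rw [Function.update_self]; ring
      · rw [Function.update_of_ne hm]
    rw [update_sq, update_sq, xC_sq_add_intCast]

theorem signFlip_xC_self (n : ℤ) : signFlip k n (xC k n) = -xC k n := by
  simp [signFlip]

theorem signFlip_of_mem_RI {n : ℤ} {I : Finset ℤ} (hn0 : n ≠ 0) (hn : n ∉ I) {a : WeylC k}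
    (ha : a ∈ RI k I) : signFlip k n a = a := by
  have hfix {m : ℤ} (hm : m ≠ n) : signFlip k n (xC k m) = xC k m := by
    simp [signFlip, Function.update_of_ne hm]
  refine Algebra.adjoin_le (S := AlgHom.equalizer (signFlip k n) (AlgHom.id k _)) ?_ ha
  rintro _ (rfl | ⟨m, hm, rfl⟩)
  · exact hfix hn0.symm
  · exact hfix (ne_of_mem_of_not_mem hm hn)

/-- The homomorphism `R_I[√(x_n²)] → C` that sends the square root to `x_n`. -/
def quadraticAlgebraHom (I : Finset ℤ) (n : ℤ) :
    QuadraticAlgebra (RI k I) (xSq k I n) 0 →ₐ[RI k I] WeylC k :=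
  QuadraticAlgebra.lift ⟨xC k n, by simp [Subalgebra.smul_def, xSq, sq]⟩

theorem quadraticAlgebraHom_apply (I : Finset ℤ) (n : ℤ)
    (z : QuadraticAlgebra (RI k I) (xSq k I n) 0) :
    quadraticAlgebraHom k I n z = z.re + z.im * xC k n := by
  simp [quadraticAlgebraHom, Subalgebra.smul_def]

theorem range_quadraticAlgebraHom (I : Finset ℤ) (n : ℤ) :
    ((quadraticAlgebraHom k I n).restrictScalars k).range = RI k (insert n I) := by
  have hxn : xC k n ∈ RI k (insert n I) :=
    Algebra.subset_adjoin (Or.inr ⟨n, by simp, rfl⟩)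
  apply le_antisymm
  · rintro _ ⟨z, rfl⟩
    have hI := RI_mono (k := k) (Finset.subset_insert n I)
    exact quadraticAlgebraHom_apply k I n z ▸
      add_mem (hI z.re.2) (mul_mem (hI z.im.2) hxn)
  · have hrange (a b : RI k I) : (a + b * xC k n : WeylC k) ∈
        ((quadraticAlgebraHom k I n).restrictScalars k).range :=
      ⟨⟨a, b⟩, quadraticAlgebraHom_apply k I n _⟩
    rw [RI, Finset.coe_insert, Set.image_insert_eq, Set.union_insert, Algebra.adjoin_le_iff]
    rintro x (rfl | hx)
    · simpa using hrange 0 1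
    · simpa using hrange ⟨x, Algebra.subset_adjoin hx⟩ 0

/-- `R_∅ = k[x_0]` is a polynomial ring. -/
def polynomialEquivRIEmpty : Polynomial k ≃ₐ[k] RI k ∅ :=
  (Polynomial.algEquivOfTranscendental k (xC k 0) (transcendental_xC k 0)).trans <|
    Subalgebra.equivOfEq _ _ (by simp [RI])

theorem isDedekindDomain_RI_empty : IsDedekindDomain (RI k ∅) :=
  isDedekindDomain_of_ringEquiv (polynomialEquivRIEmpty k).toRingEquiv

end

theorem isUnit_two_RI (I : Finset ℤ) : IsUnit (2 : RI k I) := by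
  rw [← map_ofNat (algebraMap k (RI k I)) 2]
  exact (IsUnit.mk0 2 two_ne_zero).map (algebraMap k (RI k I))

theorem isCoprime_xSq (I : Finset ℤ) {m n : ℤ} (h : m ≠ n) :
    IsCoprime (xSq k I m) (xSq k I n) := by
  have hne : ((n - m : ℤ) : k) ≠ 0 := Int.cast_ne_zero.2 (sub_ne_zero.2 h.symm)
  have hsub : xSq k I m - xSq k I n = algebraMap k (RI k I) (n - m : ℤ) := by
    ext
    simp only [xSq, AddSubgroupClass.coe_sub, map_intCast, SubringClass.coe_intCast]
    push_cast
    linear_combination xC_sq_add_intCast k n m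
  obtain ⟨u, hu⟩ : IsUnit (xSq k I m - xSq k I n) := hsub ▸ (IsUnit.mk0 _ hne).map _
  exact ⟨↑u⁻¹, -↑u⁻¹, by linear_combination u.inv_mul - (↑u⁻¹ : RI k I) * hu⟩

theorem quadraticAlgebraHom_injective {I : Finset ℤ} {n : ℤ} [IsDomain (RI k I)] (hn0 : n ≠ 0)
    (hn : n ∉ I) : Function.Injective (quadraticAlgebraHom k I n) := by
  rw [injective_iff_map_eq_zero]
  intro z hz
  rw [quadraticAlgebraHom_apply] at hz
  have hflip : (z.re : WeylC k) - z.im * xC k n = 0 := by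
    have h := congrArg (signFlip k n) hz
    simp only [map_add, map_mul, map_zero, signFlip_xC_self,
      signFlip_of_mem_RI k hn0 hn (Subtype.property _)] at h
    linear_combination h
  have hadd : z.re + z.re = 0 := Subtype.ext (by push_cast; linear_combination hz + hflip)
  have hre : z.re = 0 := (isUnit_two_RI k I).mul_right_eq_zero.1 (by rw [two_mul, hadd])
  have him : z.im * xSq k I n = 0 := Subtype.ext <| by
    simp only [hre, ZeroMemClass.coe_zero, zero_add, MulMemClass.coe_mul, xSq] at hz ⊢
    linear_combination hz * xC k n
  exact QuadraticAlgebra.ext hre ((mul_eq_zero.1 him).resolve_right (xSq_ne_zero k I n))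

/-- The presentation `R_I[√(x_n²)] ≃ R_{I ∪ {n}}`. -/
def quadraticAlgebraEquiv {I : Finset ℤ} {n : ℤ} [IsDomain (RI k I)] (hn0 : n ≠ 0)
    (hn : n ∉ I) : QuadraticAlgebra (RI k I) (xSq k I n) 0 ≃ₐ[k] RI k (insert n I) :=
  (AlgEquiv.ofInjective ((quadraticAlgebraHom k I n).restrictScalars k)
    (quadraticAlgebraHom_injective k hn0 hn)).trans
    (Subalgebra.equivOfEq _ _ (range_quadraticAlgebraHom k I n))

theorem quadraticAlgebraEquiv_algebraMap_xSq {I : Finset ℤ} {n : ℤ} [IsDomain (RI k I)]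
    (hn0 : n ≠ 0) (hn : n ∉ I) (m : ℤ) :
    quadraticAlgebraEquiv k hn0 hn (algebraMap (RI k I) _ (xSq k I m)) =
      xSq k (insert n I) m :=
  Subtype.ext ((quadraticAlgebraHom k I n).commutes (xSq k I m))

open Polynomial in
theorem isRadical_xSq_empty {n : ℤ} (hn : n ≠ 0) : IsRadical (xSq k ∅ n) := by
  have hmap : polynomialEquivRIEmpty k (X ^ 2 - C (n : k)) = xSq k ∅ n := by
    apply Subtype.ext
    simp only [polynomialEquivRIEmpty, xSq, map_intCast, AlgEquiv.trans_apply,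
      algEquivOfTranscendental_apply, aeval_sub, map_pow, aeval_X, SubmonoidClass.mk_pow,
      Subalgebra.equivOfEq_apply, AddSubgroupClass.coe_sub, SubringClass.coe_intCast]
    linear_combination xC_sq_add_intCast k n 0
  have hsep : (X ^ 2 - C (n : k)).Separable :=
    separable_X_pow_sub_C _ two_ne_zero (Int.cast_ne_zero.2 hn)
  exact hmap ▸
    isRadical_map_mulEquiv (polynomialEquivRIEmpty k).toMulEquiv hsep.squarefree.isRadical

theorem isDedekindDomain_RI_and_isRadical_xSq (I : Finset ℤ) (hI : 0 ∉ I) :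
    IsDedekindDomain (RI k I) ∧ ∀ n ≠ 0, n ∉ I → IsRadical (xSq k I n) := by
  induction I using Finset.induction_on with
  | empty => exact ⟨isDedekindDomain_RI_empty k, fun n hn _ ↦ isRadical_xSq_empty k hn⟩
  | insert n I hn ih =>
    have hn0 : n ≠ 0 := fun h ↦ hI (h ▸ Finset.mem_insert_self n I)
    obtain ⟨hded, hrad⟩ := ih fun h ↦ hI (Finset.mem_insert_of_mem h)
    have := isDedekindDomain_quadraticAlgebra (isUnit_two_RI k I) (xSq_ne_zero k I n)
      (hrad n hn0 hn) (not_isUnit_xSq k I n)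
    let e := quadraticAlgebraEquiv k hn0 hn
    refine ⟨isDedekindDomain_of_ringEquiv e.toRingEquiv, fun m hm0 hm ↦ ?_⟩
    obtain ⟨hmn, hmI⟩ := not_or.1 (mt Finset.mem_insert.2 hm)
    rw [← quadraticAlgebraEquiv_algebraMap_xSq k hn0 hn m]
    exact isRadical_map_mulEquiv e.toMulEquiv <|
      isRadical_algebraMap_quadraticAlgebra (isUnit_two_RI k I) (hrad m hm0 hmI)
        (isCoprime_xSq k I hmn)

instance isDedekindDomain_RI (I : Finset ℤ) : IsDedekindDomain (RI k I) :=
  RI_erase_zero k I ▸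
    (isDedekindDomain_RI_and_isRadical_xSq k (I.erase 0) (Finset.notMem_erase 0 I)).1

instance isDomain : IsDomain (WeylC k) :=
  isDomain_of_directed_iSup_eq_top (Monotone.directed_le fun _ _ ↦ RI_mono) (iSup_RI k)

end WeylC

set_option synthInstance.maxHeartbeats 1000000 in
set_option maxHeartbeats 1000000 in
/-- `C` is an ascending union of Dedekind domains: each `R_I`
(for finite `I ⊆ ℤ ∖ {0}`) is a Dedekind domain, `R_I ⊆ R_J` when `I ⊆ J`, the
union of all the `R_I` is `C`, and `C` is flat over each `R_I`. -/
theorem weylC_union_of_dedekind :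
    (∀ I : Finset ℤ, (0 : ℤ) ∉ I → IsDedekindDomain ↥(RI k I)) ∧
    (∀ I : Finset ℤ, (0 : ℤ) ∉ I → Module.Flat ↥(RI k I) (WeylC k)) ∧
    (∀ I J : Finset ℤ, I ⊆ J → RI k I ≤ RI k J) ∧
    (⨆ I : {I : Finset ℤ // (0 : ℤ) ∉ I}, RI k I.1) = ⊤ := by
  refine ⟨fun I _ ↦ WeylC.isDedekindDomain_RI k I, fun I _ ↦ ?_, fun _ _ ↦ WeylC.RI_mono, ?_⟩
  · have : Module.IsTorsionFree (RI k I) (WeylC k) := inferInstance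
    infer_instance
  · rw [eq_top_iff, ← WeylC.iSup_RI]
    exact iSup_le fun I ↦ le_iSup_of_le ⟨I.erase 0, Finset.notMem_erase 0 I⟩
      (WeylC.RI_erase_zero k I).ge
end Quadratic
end
end

section
/- For finite subsets I, J of ℤ, there is an isomorphism of ℤ_fin-graded C-modules Cx_I ⊕ Cx_J ≅ Cx_{I∪J} ⊕ Cx_{I∩J}. -/
/-!
In `k[t]` the polynomials `∏ (t - i)` over `i ∈ I \ J` and `∏ (t - j)` over `j ∈ J \ I` are
coprime. At `t = x_0²` they become `x_{I \ J}²` and `x_{J \ I}²`, so a Bézout relation yields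
`s + r = 1` in the degree-zero ring `C_∅` with `x_{I \ J} ∣ s` and `x_{J \ I} ∣ r`. Hence
`Cx_{I ∪ J} = Cx_I ∩ Cx_J` and `Cx_{I ∩ J} = Cx_I + Cx_J`, and the exact sequence
`0 → P ∩ Q → P ⊕ Q → P + Q → 0` for `P = Cx_I` and `Q = Cx_J` is split by `y ↦ (s y, r y)`.
-/

open scoped symmDiff

noncomputable section

variable (k : Type) [Field k]

/-- The graded ideal `Cx_I` generated by `x_I`. -/
def Cx (I : Finset ℤ) : Ideal (WeylC k) := Ideal.span {xS k I}

variable [CharZero k]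

theorem smul_mem_of_mem_sup {R M : Type*} [Semiring R] [AddCommMonoid M] [Module R M]
    {P Q : Submodule R M} {s : R} (hs : ∀ x ∈ Q, s • x ∈ P) {x : M} (hx : x ∈ P ⊔ Q) :
    s • x ∈ P := by
  obtain ⟨y, hy, z, hz, rfl⟩ := Submodule.mem_sup.mp hx
  rw [smul_add]
  exact add_mem (P.smul_mem s hy) (hs z hz)

/-- The splitting of `0 → P ⊓ Q → P × Q → P ⊔ Q → 0` given by a decomposition `s + r = 1` for
which multiplication by `s` carries `Q` into `P` and multiplication by `r` carries `P` into `Q`.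
The inclusion of `P ⊓ Q` is normalised as `x ↦ (x, -x)`, so that `P × Q → P ⊔ Q` is the sum. -/
def prodEquivInfSup {R M : Type*} [CommRing R] [AddCommGroup M] [Module R M]
    {P Q : Submodule R M} {s r : R} (hsr : s + r = 1) (hs : ∀ x ∈ Q, s • x ∈ P)
    (hr : ∀ x ∈ P, r • x ∈ Q) : (P × Q) ≃ₗ[R] ↥(P ⊓ Q) × ↥(P ⊔ Q) where
  toFun p :=
    (⟨r • (p.1 : M) - s • (p.2 : M),
      P.sub_mem (P.smul_mem r p.1.2) (hs _ p.2.2), Q.sub_mem (hr _ p.1.2) (Q.smul_mem s p.2.2)⟩,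
    ⟨p.1 + p.2, Submodule.add_mem_sup p.1.2 p.2.2⟩)
  invFun q :=
    (⟨q.1 + s • (q.2 : M), P.add_mem q.1.2.1 (smul_mem_of_mem_sup hs q.2.2)⟩,
    ⟨r • (q.2 : M) - q.1,
      Q.sub_mem (smul_mem_of_mem_sup hr (sup_comm P Q ▸ q.2.2)) q.1.2.2⟩)
  map_add' p p' := by
    ext <;> simp only [Prod.fst_add, Prod.snd_add, Submodule.coe_add] <;> module
  map_smul' c p := by
    ext <;> simp only [Prod.smul_fst, Prod.smul_snd, Submodule.coe_smul, RingHom.id_apply] <;>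
      module
  left_inv p := by
    obtain rfl : s = 1 - r := eq_sub_of_add_eq hsr
    ext <;> dsimp only <;> module
  right_inv q := by
    obtain rfl : s = 1 - r := eq_sub_of_add_eq hsr
    ext <;> dsimp only <;> module

theorem isCoprime_prod_X_sub_C {ι κ F : Type*} [Field F] {s : Finset ι} {t : Finset κ}
    {a : ι → F} {b : κ → F} (h : ∀ i ∈ s, ∀ j ∈ t, a i ≠ b j) :
    IsCoprime (∏ i ∈ s, (Polynomial.X - Polynomial.C (a i)))
      (∏ j ∈ t, (Polynomial.X - Polynomial.C (b j))) :=
  IsCoprime.prod_left fun i hi => IsCoprime.prod_right fun j hj =>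
    Polynomial.isCoprime_X_sub_C_of_isUnit_sub (sub_ne_zero.mpr (h i hi j hj)).isUnit

section WeylC

variable {F : Type} [Field F] {I J K : Finset ℤ}

theorem xC_sq (n : ℤ) : xC F n ^ 2 = xC F 0 ^ 2 - (n : WeylC F) := by
  have hrel : xC F n ^ 2 + (n : WeylC F) = xC F 0 ^ 2 + ((0 : ℤ) : WeylC F) :=
    Ideal.Quotient.eq (x := MvPolynomial.X n ^ 2 + (n : MvPolynomial ℤ F))
      (y := MvPolynomial.X 0 ^ 2 + ((0 : ℤ) : MvPolynomial ℤ F)) |>.mpr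
      (Ideal.subset_span ⟨0, n, sub_add_eq_sub_sub _ _ _⟩)
  rw [Int.cast_zero] at hrel
  linear_combination hrel

theorem aeval_prod_X_sub_C (I : Finset ℤ) :
    Polynomial.aeval (xC F 0 ^ 2) (∏ i ∈ I, (Polynomial.X - Polynomial.C (i : F))) =
      xS F I ^ 2 := by
  rw [map_prod, xS, ← Finset.prod_pow]
  refine Finset.prod_congr rfl fun i _ => ?_
  rw [xC_sq i, map_sub, Polynomial.aeval_X, Polynomial.aeval_C, map_intCast]

theorem exists_mem_Cphi_add_eq_one (h : ∀ i ∈ I, ∀ j ∈ J, (i : F) ≠ j) :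
    ∃ s ∈ Cphi F, ∃ r ∈ Cphi F, s + r = 1 ∧ xS F I ∣ s ∧ xS F J ∣ r := by
  obtain ⟨u, v, huv⟩ := isCoprime_prod_X_sub_C h
  have hdvd (w : Polynomial F) (L : Finset ℤ) : xS F L ∣ Polynomial.aeval (xC F 0 ^ 2)
      (w * ∏ l ∈ L, (Polynomial.X - Polynomial.C (l : F))) := by
    rw [map_mul, aeval_prod_X_sub_C]
    exact (dvd_pow_self _ two_ne_zero).mul_left _
  exact ⟨_, Polynomial.aeval_mem_adjoin_singleton F _, _,
    Polynomial.aeval_mem_adjoin_singleton F _, by rw [← map_add, huv, map_one],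
    hdvd u I, hdvd v J⟩

theorem mul_mem_Cgrade {c y : WeylC F} (hc : c ∈ Cphi F) (hy : y ∈ Cgrade F K) :
    c * y ∈ Cgrade F K := by
  obtain ⟨z, hz, rfl⟩ := hy
  exact ⟨c * z, (Cphi F).mul_mem hc hz, mul_assoc c z (xS F K)⟩

theorem Cx_antitone : Antitone (Cx F) := fun _ _ h =>
  Ideal.span_singleton_le_span_singleton.mpr (Finset.prod_dvd_prod_of_subset _ _ _ h)

theorem xS_dvd_xS_sdiff_mul_xS (I J : Finset ℤ) : xS F J ∣ xS F (J \ I) * xS F I := by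
  rw [xS, xS, xS, ← Finset.prod_union Finset.sdiff_disjoint, Finset.sdiff_union_self_eq_union]
  exact Finset.prod_dvd_prod_of_subset _ _ _ Finset.subset_union_left

theorem mul_mem_Cx {c y : WeylC F} (hc : xS F (J \ I) ∣ c) (hy : y ∈ Cx F I) :
    c * y ∈ Cx F J :=
  Ideal.mem_span_singleton.mpr <|
    (xS_dvd_xS_sdiff_mul_xS I J).trans (mul_dvd_mul hc (Ideal.mem_span_singleton.mp hy))

theorem Cx_union_of_isCoprime (h : IsCoprime (xS F (I \ J)) (xS F (J \ I))) :
    Cx F (I ∪ J) = Cx F I ⊓ Cx F J := by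
  refine le_antisymm (le_inf (Cx_antitone Finset.subset_union_left)
    (Cx_antitone Finset.subset_union_right)) fun y ⟨hI, hJ⟩ => ?_
  obtain ⟨u, v, huv⟩ := h
  rw [← one_mul y, ← huv, add_mul]
  refine add_mem (mul_mem_Cx ?_ hJ) (mul_mem_Cx ?_ hI)
  · rw [Finset.union_sdiff_right]
    exact dvd_mul_left _ u
  · rw [Finset.union_sdiff_left]
    exact dvd_mul_left _ v

theorem Cx_inter_of_isCoprime (h : IsCoprime (xS F (I \ J)) (xS F (J \ I))) :
    Cx F (I ∩ J) = Cx F I ⊔ Cx F J := by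
  refine le_antisymm (fun y hy => ?_) (sup_le (Cx_antitone Finset.inter_subset_left)
    (Cx_antitone Finset.inter_subset_right))
  obtain ⟨u, v, huv⟩ := h
  rw [← one_mul y, ← huv, add_mul]
  refine Submodule.add_mem_sup (mul_mem_Cx ?_ hy) (mul_mem_Cx ?_ hy)
  · rw [Finset.sdiff_inter_self_left]
    exact dvd_mul_left _ u
  · rw [Finset.sdiff_inter_self_right]
    exact dvd_mul_left _ v

theorem cx_sum_iso_general (h : ∀ i ∈ I \ J, ∀ j ∈ J \ I, (i : F) ≠ j) :
    ∃ e : (↥(Cx F I) × ↥(Cx F J)) ≃ₗ[WeylC F] (↥(Cx F (I ∪ J)) × ↥(Cx F (I ∩ J))),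
      (∀ (K : Finset ℤ) (p : ↥(Cx F I) × ↥(Cx F J)),
        (p.1 : WeylC F) ∈ Cgrade F K → (p.2 : WeylC F) ∈ Cgrade F K →
        ((e p).1 : WeylC F) ∈ Cgrade F K ∧ ((e p).2 : WeylC F) ∈ Cgrade F K) ∧
      (∀ (K : Finset ℤ) (q : ↥(Cx F (I ∪ J)) × ↥(Cx F (I ∩ J))),
        (q.1 : WeylC F) ∈ Cgrade F K → (q.2 : WeylC F) ∈ Cgrade F K →
        ((e.symm q).1 : WeylC F) ∈ Cgrade F K ∧ ((e.symm q).2 : WeylC F) ∈ Cgrade F K) := by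
  obtain ⟨s, hs, r, hr, hsr, hIs, hJr⟩ := exists_mem_Cphi_add_eq_one h
  have hcop : IsCoprime (xS F (I \ J)) (xS F (J \ I)) :=
    IsCoprime.of_isCoprime_of_dvd_left
      (IsCoprime.of_isCoprime_of_dvd_right ⟨1, 1, by rwa [one_mul, one_mul]⟩ hJr) hIs
  rw [Cx_union_of_isCoprime hcop, Cx_inter_of_isCoprime hcop]
  refine ⟨prodEquivInfSup hsr (fun _ => mul_mem_Cx hIs) (fun _ => mul_mem_Cx hJr),
    fun K p hp₁ hp₂ => ⟨?_, add_mem hp₁ hp₂⟩, fun K q hq₁ hq₂ => ⟨?_, ?_⟩⟩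
  · exact sub_mem (mul_mem_Cgrade hr hp₁) (mul_mem_Cgrade hs hp₂)
  · exact add_mem hq₁ (mul_mem_Cgrade hs hq₂)
  · exact sub_mem (mul_mem_Cgrade hr hq₂) hq₁

end WeylC

/-- There is an isomorphism of `ℤ_fin`-graded `C`-modules
`Cx_I ⊕ Cx_J ≅ Cx_{I∪J} ⊕ Cx_{I∩J}`: a `C`-linear equivalence that, together
with its inverse, preserves homogeneous components (a pair is homogeneous of
degree `K` when both coordinates lie in `C_K`). -/
theorem cx_sum_iso (I J : Finset ℤ) :
    ∃ e : (↥(Cx k I) × ↥(Cx k J)) ≃ₗ[WeylC k] (↥(Cx k (I ∪ J)) × ↥(Cx k (I ∩ J))),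
      (∀ (K : Finset ℤ) (p : ↥(Cx k I) × ↥(Cx k J)),
        (p.1 : WeylC k) ∈ Cgrade k K → (p.2 : WeylC k) ∈ Cgrade k K →
        ((e p).1 : WeylC k) ∈ Cgrade k K ∧ ((e p).2 : WeylC k) ∈ Cgrade k K) ∧
      (∀ (K : Finset ℤ) (q : ↥(Cx k (I ∪ J)) × ↥(Cx k (I ∩ J))),
        (q.1 : WeylC k) ∈ Cgrade k K → (q.2 : WeylC k) ∈ Cgrade k K →
        ((e.symm q).1 : WeylC k) ∈ Cgrade k K ∧ ((e.symm q).2 : WeylC k) ∈ Cgrade k K) :=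
  cx_sum_iso_general fun _ hi _ hj hij =>
    (Finset.mem_sdiff.mp hi).2 (Int.cast_injective hij ▸ (Finset.mem_sdiff.mp hj).1)
end
end
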